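/- Let 𝔄 be a structure interpreting the signature Σ (which contains the unary predicate O and the binary predicates R_h, R_v, and does not contain Q, P). Then φ₂ is satisfied in some {Q,P}-extension of 𝔄 if and only if there exists an element a ∈ O^𝔄 that either starts an infinite R_h/R_v-path in 𝔄 or starts a finite R_h/R_v-path ending at the root of a non-closing grid cell. -/

import Mathlib

/-! Core: relational two-variable first-order logic with equality (unary and
binary predicates only), the guarded fragment GF², structures, satisfaction,
atomic types, (bounded/delimited) guarded bisimulations, forest structures. -/

namespace GFC

inductive Var : Type
  | x
  | y
deriving DecidableEq

/-- Formulas of two-variable relational FO with equality (variables `x`, `y`). -/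
inductive Fml (U B : Type) : Type
  | uatom : U → Var → Fml U B
  | batom : B → Var → Var → Fml U B
  | eqv   : Var → Var → Fml U B
  | fls   : Fml U B
  | neg   : Fml U B → Fml U B
  | conj  : Fml U B → Fml U B → Fml U B
  | disj  : Fml U B → Fml U B → Fml U B
  | impl  : Fml U B → Fml U B → Fml U B
  | all   : Var → Fml U B → Fml U B
  | ex    : Var → Fml U B → Fml U B

namespace Fml

variable {U B : Type}

def free : Fml U B → Set Var
  | uatom _ v => {v}
  | batom _ v w => {v, w}
  | eqv v w => {v, w}
  | fls => ∅
  | neg φ => φ.free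
  | conj φ ψ => φ.free ∪ ψ.free
  | disj φ ψ => φ.free ∪ ψ.free
  | impl φ ψ => φ.free ∪ ψ.free
  | all v φ => φ.free \ {v}
  | ex v φ => φ.free \ {v}

def IsSentence (φ : Fml U B) : Prop := φ.free = ∅

def upreds : Fml U B → Set U
  | uatom P _ => {P}
  | batom _ _ _ => ∅
  | eqv _ _ => ∅
  | fls => ∅
  | neg φ => φ.upreds
  | conj φ ψ => φ.upreds ∪ ψ.upreds
  | disj φ ψ => φ.upreds ∪ ψ.upreds
  | impl φ ψ => φ.upreds ∪ ψ.upreds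
  | all _ φ => φ.upreds
  | ex _ φ => φ.upreds

def bpreds : Fml U B → Set B
  | uatom _ _ => ∅
  | batom R _ _ => {R}
  | eqv _ _ => ∅
  | fls => ∅
  | neg φ => φ.bpreds
  | conj φ ψ => φ.bpreds ∪ ψ.bpreds
  | disj φ ψ => φ.bpreds ∪ ψ.bpreds
  | impl φ ψ => φ.bpreds ∪ ψ.bpreds
  | all _ φ => φ.bpreds
  | ex _ φ => φ.bpreds

def IsAtom : Fml U B → Prop
  | uatom _ _ => True
  | batom _ _ _ => True
  | eqv _ _ => True
  | _ => False

def IsEqAtom : Fml U B → Prop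
  | eqv _ _ => True
  | _ => False

/-- guarded quantifier depth (in GF² formulas every quantifier is guarded) -/
def gdepth : Fml U B → ℕ
  | uatom _ _ => 0
  | batom _ _ _ => 0
  | eqv _ _ => 0
  | fls => 0
  | neg φ => φ.gdepth
  | conj φ ψ => max φ.gdepth ψ.gdepth
  | disj φ ψ => max φ.gdepth ψ.gdepth
  | impl φ ψ => max φ.gdepth ψ.gdepth
  | all _ φ => φ.gdepth + 1
  | ex _ φ => φ.gdepth + 1

/-- subformulas (including the formula itself) -/
def Subf : Fml U B → Set (Fml U B)
  | uatom P v => {uatom P v}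
  | batom R v w => {batom R v w}
  | eqv v w => {eqv v w}
  | fls => {fls}
  | neg φ => insert (neg φ) φ.Subf
  | conj φ ψ => insert (conj φ ψ) (φ.Subf ∪ ψ.Subf)
  | disj φ ψ => insert (disj φ ψ) (φ.Subf ∪ ψ.Subf)
  | impl φ ψ => insert (impl φ ψ) (φ.Subf ∪ ψ.Subf)
  | all v φ => insert (all v φ) φ.Subf
  | ex v φ => insert (ex v φ) φ.Subf

/-- rename the free variables along `f` (bound variables untouched) -/
def renameFree : (Var → Var) → Fml U B → Fml U B
  | f, uatom P v => uatom P (f v)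
  | f, batom R v w => batom R (f v) (f w)
  | f, eqv v w => eqv (f v) (f w)
  | _, fls => fls
  | f, neg φ => neg (renameFree f φ)
  | f, conj φ ψ => conj (renameFree f φ) (renameFree f ψ)
  | f, disj φ ψ => disj (renameFree f φ) (renameFree f ψ)
  | f, impl φ ψ => impl (renameFree f φ) (renameFree f ψ)
  | f, all v φ => all v (renameFree (Function.update f v v) φ)
  | f, ex v φ => ex v (renameFree (Function.update f v v) φ)

end Fml

/-- The two-variable guarded fragment GF²: quantification only in the guarded
patterns `∀v (α → φ)` and `∃v (α ∧ φ)` with `α` an atom containing all free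
variables of `φ` as well as the quantified variable `v`. -/
inductive IsGF2 {U B : Type} : Fml U B → Prop
  | uatom (P : U) (v : Var) : IsGF2 (.uatom P v)
  | batom (R : B) (v w : Var) : IsGF2 (.batom R v w)
  | eqv (v w : Var) : IsGF2 (.eqv v w)
  | fls : IsGF2 .fls
  | neg {φ} : IsGF2 φ → IsGF2 (.neg φ)
  | conj {φ ψ} : IsGF2 φ → IsGF2 ψ → IsGF2 (.conj φ ψ)
  | disj {φ ψ} : IsGF2 φ → IsGF2 ψ → IsGF2 (.disj φ ψ)
  | impl {φ ψ} : IsGF2 φ → IsGF2 ψ → IsGF2 (.impl φ ψ)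
  | allG {v : Var} {α φ : Fml U B} :
      α.IsAtom → IsGF2 φ → φ.free ∪ {v} ⊆ α.free → IsGF2 (.all v (.impl α φ))
  | exG {v : Var} {α φ : Fml U B} :
      α.IsAtom → IsGF2 φ → φ.free ∪ {v} ⊆ α.free → IsGF2 (.ex v (.conj α φ))

/-- openGF²: GF² formulas with exactly one free variable, in which equality is
never used as a guard and which contain no subformula that is a sentence. -/
def IsOpenGF2 {U B : Type} (φ : Fml U B) : Prop :=
  IsGF2 φ ∧ (∃ v, φ.free = {v}) ∧
  (∀ ψ ∈ φ.Subf, ¬ ψ.IsSentence) ∧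
  (∀ ψ ∈ φ.Subf, ∀ (v : Var) (α χ : Fml U B),
      (ψ = .all v (.impl α χ) ∨ ψ = .ex v (.conj α χ)) → ¬ α.IsEqAtom)

/-- relational structures interpreting unary predicates `U` and binary
predicates `B` -/
structure Str (U B : Type) where
  Dom : Type
  nonempty : Nonempty Dom
  u : U → Dom → Prop
  b : B → Dom → Dom → Prop

def upd {D : Type} (σ : Var → D) (v : Var) (d : D) : Var → D :=
  fun w => if w = v then d else σ w

def Sat {U B : Type} (A : Str U B) : Fml U B → (Var → A.Dom) → Prop
  | .uatom P v, σ => A.u P (σ v)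
  | .batom R v w, σ => A.b R (σ v) (σ w)
  | .eqv v w, σ => σ v = σ w
  | .fls, _ => False
  | .neg φ, σ => ¬ Sat A φ σ
  | .conj φ ψ, σ => Sat A φ σ ∧ Sat A ψ σ
  | .disj φ ψ, σ => Sat A φ σ ∨ Sat A ψ σ
  | .impl φ ψ, σ => Sat A φ σ → Sat A ψ σ
  | .all v φ, σ => ∀ d : A.Dom, Sat A φ (upd σ v d)
  | .ex v φ, σ => ∃ d : A.Dom, Sat A φ (upd σ v d)

/-- truth of a sentence in a structure -/
def SatS {U B : Type} (A : Str U B) (φ : Fml U B) : Prop := ∀ σ, Sat A φ σ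

def Entails {U B : Type} (φ ψ : Fml U B) : Prop :=
  ∀ A : Str U B, SatS A φ → SatS A ψ

def Satisfiable {U B : Type} (φ : Fml U B) : Prop := ∃ A : Str U B, SatS A φ

/-- a GF²(Σ)-sentence, for the signature Σ = (SU, SB) -/
def IsGF2Sentence {U B : Type} (SU : Set U) (SB : Set B) (ψ : Fml U B) : Prop :=
  IsGF2 ψ ∧ ψ.IsSentence ∧ ψ.upreds ⊆ SU ∧ ψ.bpreds ⊆ SB

/-- `φ₁ ⊨_Σ φ₂` : GF²(Σ)-entailment -/
def GF2Entails {U B : Type} (SU : Set U) (SB : Set B) (φ₁ φ₂ : Fml U B) : Prop :=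
  ∀ ψ : Fml U B, IsGF2Sentence SU SB ψ → Entails φ₂ ψ → Entails φ₁ ψ

/-- atomic formulas in the variables x, y -/
inductive Atom2 (U B : Type) : Type
  | ua : U → Var → Atom2 U B
  | ba : B → Var → Var → Atom2 U B

def vval {D : Type} (a a' : D) : Var → D
  | .x => a
  | .y => a'

def Atom2.inSig {U B : Type} (SU : Set U) (SB : Set B) : Atom2 U B → Prop
  | .ua P _ => P ∈ SU
  | .ba R _ _ => R ∈ SB

def Atom2.holds {U B : Type} (A : Str U B) (a a' : A.Dom) : Atom2 U B → Prop
  | .ua P v => A.u P (vval a a' v)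
  | .ba R v w => A.b R (vval a a' v) (vval a a' w)

def Atom2.onlyX {U B : Type} : Atom2 U B → Prop
  | .ua _ v => v = Var.x
  | .ba _ v w => v = Var.x ∧ w = Var.x

/-- the atomic 1-type of `a` for the signature `(SU, SB)` (the set of
Σ-atoms in the single variable x satisfied by `a`; this determines the set of
negated atoms as well) -/
def atp1 {U B : Type} (A : Str U B) (SU : Set U) (SB : Set B) (a : A.Dom) :
    Set (Atom2 U B) :=
  {α | α.onlyX ∧ α.inSig SU SB ∧ α.holds A a a}

/-- the atomic 2-type of `(a, a')` for the signature `(SU, SB)` (the set of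
Σ-atoms in x, y satisfied by `(a, a')`; together with `a ≠ a'` this determines
the atomic 2-type) -/
def atp2 {U B : Type} (A : Str U B) (SU : Set U) (SB : Set B) (a a' : A.Dom) :
    Set (Atom2 U B) :=
  {α | α.inSig SU SB ∧ α.holds A a a'}

/-- the atomic 2-type of `(a, a')` is guarded (contains `R x y` or `R y x`
for some binary `R ∈ SB`) -/
def Guarded2 {U B : Type} (A : Str U B) (SB : Set B) (a a' : A.Dom) : Prop :=
  ∃ R ∈ SB, A.b R a a' ∨ A.b R a' a

/-- GF²(Σ)-bisimulation between structures `A` and `Bm` -/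
structure IsBisim {U B : Type} (A Bm : Str U B) (SU : Set U) (SB : Set B)
    (Z : A.Dom → Bm.Dom → Prop) : Prop where
  atom_eq : ∀ {a b}, Z a b → atp1 A SU SB a = atp1 Bm SU SB b
  forth : ∀ {a b}, Z a b → ∀ a', a' ≠ a → Guarded2 A SB a a' →
      ∃ b', b' ≠ b ∧ atp2 A SU SB a a' = atp2 Bm SU SB b b' ∧ Z a' b'
  back : ∀ {a b}, Z a b → ∀ b', b' ≠ b → Guarded2 Bm SB b b' →
      ∃ a', a' ≠ a ∧ atp2 A SU SB a a' = atp2 Bm SU SB b b' ∧ Z a' b'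

/-- `(A, a) ∼_Σ (Bm, b)` -/
def Bisim {U B : Type} (A Bm : Str U B) (SU : Set U) (SB : Set B)
    (a : A.Dom) (b : Bm.Dom) : Prop :=
  ∃ Z, IsBisim A Bm SU SB Z ∧ Z a b

/-- `(A, a) ∼ᵏ_Σ (Bm, b)` : k-GF²(Σ)-bisimilarity -/
def KBisim {U B : Type} (A Bm : Str U B) (SU : Set U) (SB : Set B) :
    ℕ → A.Dom → Bm.Dom → Prop
  | 0, a, b => atp1 A SU SB a = atp1 Bm SU SB b
  | k+1, a, b => atp1 A SU SB a = atp1 Bm SU SB b ∧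
      (∀ a', a' ≠ a → Guarded2 A SB a a' →
        ∃ b', b' ≠ b ∧ atp2 A SU SB a a' = atp2 Bm SU SB b b' ∧
          KBisim A Bm SU SB k a' b') ∧
      (∀ b', b' ≠ b → Guarded2 Bm SB b b' →
        ∃ a', a' ≠ a ∧ atp2 A SU SB a a' = atp2 Bm SU SB b b' ∧
          KBisim A Bm SU SB k a' b')

/-- a (full-signature) atomic 2-type, given as its set of positive atoms,
is guarded -/
def Guarded2Type {U B : Type} (τ : Set (Atom2 U B)) : Prop :=
  ∃ R : B, Atom2.ba R Var.x Var.y ∈ τ ∨ Atom2.ba R Var.y Var.x ∈ τ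

/-- successor-saturated structures -/
def SuccSaturated {U B : Type} (A : Str U B) : Prop :=
  ∀ (a : A.Dom) (τ : Set (Atom2 U B)) (Γ : Set (Fml U B)),
    Guarded2Type τ →
    (∀ ψ ∈ Γ, IsOpenGF2 ψ ∧ ψ.free = {Var.x}) →
    (∀ Γ' : Finset (Fml U B), ↑Γ' ⊆ Γ →
      ∃ a', a' ≠ a ∧ atp2 A Set.univ Set.univ a a' = τ ∧
        ∀ ψ ∈ Γ', Sat A ψ (fun _ => a')) →
    ∃ b', b' ≠ a ∧ atp2 A Set.univ Set.univ a b' = τ ∧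
      ∀ ψ ∈ Γ, Sat A ψ (fun _ => b')

/-- finite outdegree: every element stands in a guarded atomic 2-type (for the
full signature) to only finitely many elements -/
def FiniteOutdeg {U B : Type} (A : Str U B) : Prop :=
  ∀ a : A.Dom, {a' | a' ≠ a ∧ ∃ R : B, A.b R a a' ∨ A.b R a' a}.Finite

/-- Σ-adjacency (edges of the Gaifman graph of the Σ-reduct) -/
def SigAdj {U B : Type} (A : Str U B) (SB : Set B) (a a' : A.Dom) : Prop :=
  a ≠ a' ∧ ∃ R ∈ SB, A.b R a a' ∨ A.b R a' a

/-- A forest structure: a structure whose Gaifman graph is a forest, directed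
by choosing a root for each tree; `parent p c` says that `p` is the
predecessor (parent) of `c`. -/
structure Forest (U B : Type) extends Str U B where
  parent : Dom → Dom → Prop
  parent_unique : ∀ {c p p' : Dom}, parent p c → parent p' c → p = p'
  parent_wf : WellFounded parent
  adj_iff : ∀ a a' : Dom,
    (a ≠ a' ∧ ∃ R : B, b R a a' ∨ b R a' a) ↔ (parent a a' ∨ parent a' a)

namespace Forest

variable {U B : Type}

/-- `a` together with its descendants -/
def desc (F : Forest U B) (a : F.Dom) : Set F.Dom :=
  {c | Relation.ReflTransGen F.parent a c}

/-- the subtrees rooted at `a` and at `a'` are isomorphic -/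
def SubtreeIso (F : Forest U B) (a a' : F.Dom) : Prop :=
  ∃ f : (F.desc a) ≃ (F.desc a'),
    (f ⟨a, Relation.ReflTransGen.refl⟩).val = a' ∧
    (∀ c d : F.desc a, F.parent c.val d.val ↔ F.parent (f c).val (f d).val) ∧
    (∀ (P : U) (c : F.desc a), F.u P c.val ↔ F.u P (f c).val) ∧
    (∀ (R : B) (c d : F.desc a), F.b R c.val d.val ↔ F.b R (f c).val (f d).val)

/-- regular: only finitely many subtrees up to isomorphism -/
def Regular (F : Forest U B) : Prop :=
  ∃ S : Set F.Dom, S.Finite ∧ ∀ a, ∃ a' ∈ S, F.SubtreeIso a' a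

/-- `a ≺ a'` : `a` and `a'` lie in the same Σ-tree and `a` is a proper
ancestor of `a'` -/
def prec (F : Forest U B) (SB : Set B) (a a' : F.Dom) : Prop :=
  Relation.ReflTransGen (SigAdj F.toStr SB) a a' ∧ Relation.TransGen F.parent a a'

end Forest

/-- `a_⊥`-delimited GF²(Σ)-bisimulation: like a GF²(Σ)-bisimulation except that
the back-and-forth conditions are not required at pairs whose first component
is `abot` -/
structure IsPtDelimBisim {U B : Type} (A Bm : Str U B) (SU : Set U) (SB : Set B)
    (abot : A.Dom) (Z : A.Dom → Bm.Dom → Prop) : Prop where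
  atom_eq : ∀ {a b}, Z a b → atp1 A SU SB a = atp1 Bm SU SB b
  forth : ∀ {a b}, Z a b → a ≠ abot → ∀ a', a' ≠ a → Guarded2 A SB a a' →
      ∃ b', b' ≠ b ∧ atp2 A SU SB a a' = atp2 Bm SU SB b b' ∧ Z a' b'
  back : ∀ {a b}, Z a b → a ≠ abot → ∀ b', b' ≠ b → Guarded2 Bm SB b b' →
      ∃ a', a' ≠ a ∧ atp2 A SU SB a a' = atp2 Bm SU SB b b' ∧ Z a' b'

/-- `(A, a) ∼^{a_⊥}_Σ (Bm, b)` -/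
def PtDelimBisim {U B : Type} (A Bm : Str U B) (SU : Set U) (SB : Set B)
    (abot : A.Dom) (a : A.Dom) (b : Bm.Dom) : Prop :=
  ∃ Z, IsPtDelimBisim A Bm SU SB abot Z ∧ Z a b

/-- `A_⊥`-delimited GF²(Σ)-bisimulation between a forest structure `F` and a
structure `Bm`, given by a pair of relations `Z0 (∼⁰)` and `Z1 (∼¹)`. -/
structure IsDelimBisim {U B : Type} (F : Forest U B) (Bm : Str U B)
    (SU : Set U) (SB : Set B) (Abot : Set F.Dom)
    (Z0 Z1 : F.Dom → Bm.Dom → Prop) : Prop where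
  zero : ∀ {a b}, Z0 a b →
    atp1 F.toStr SU SB a = atp1 Bm SU SB b ∧
    (∀ a', a' ≠ a → Guarded2 F.toStr SB a a' →
      ∃ b', b' ≠ b ∧
        ((F.parent a' a ∧ a' ∈ Abot) → Z1 a' b') ∧
        (¬ (F.parent a' a ∧ a' ∈ Abot) → Z0 a' b')) ∧
    (∀ b', b' ≠ b → Guarded2 Bm SB b b' →
      ∃ a', a' ≠ a ∧
        ((F.parent a' a ∧ a' ∈ Abot) → Z1 a' b') ∧
        (¬ (F.parent a' a ∧ a' ∈ Abot) → Z0 a' b'))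
  one : ∀ {a b}, Z1 a b → (∀ p, F.parent p a → p ∉ Abot) →
    atp1 F.toStr SU SB a = atp1 Bm SU SB b ∧
    (∀ a', a' ≠ a → Guarded2 F.toStr SB a a' →
      ∃ b', b' ≠ b ∧
        ((F.parent a a' ∧ a ∈ Abot) → Z0 a' b') ∧
        (¬ (F.parent a a' ∧ a ∈ Abot) → Z1 a' b')) ∧
    (∀ b', b' ≠ b → Guarded2 Bm SB b b' →
      ∃ a', a' ≠ a ∧
        ((F.parent a a' ∧ a ∈ Abot) → Z0 a' b') ∧
        (¬ (F.parent a a' ∧ a ∈ Abot) → Z1 a' b'))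

/-- `(F, a) ∼^{A_⊥}_Σ (Bm, b)` -/
def DelimBisim {U B : Type} (F : Forest U B) (Bm : Str U B)
    (SU : Set U) (SB : Set B) (Abot : Set F.Dom) (a : F.Dom) (b : Bm.Dom) : Prop :=
  ∃ Z0 Z1, IsDelimBisim F Bm SU SB Abot Z0 Z1 ∧ Z0 a b

/-- `cl φ` : the subformulas of `φ` closed under single negation and renaming
of free variables (among x, y) -/
def clSet {U B : Type} (φ : Fml U B) : Set (Fml U B) :=
  {χ | ∃ ψ ∈ φ.Subf, ∃ f : Var → Var,
      χ = ψ.renameFree f ∨ χ = .neg (ψ.renameFree f)}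

/-- a 1-type for `φ₂`: a set of formulas `ψ(x)` from `cl φ₂` such that
`φ₂ ∧ ∃x ⋀ t(x)` is satisfiable -/
def OneType {U B : Type} (φ₂ : Fml U B) (t : Set (Fml U B)) : Prop :=
  t ⊆ clSet φ₂ ∧ (∀ ψ ∈ t, ψ.free ⊆ {Var.x}) ∧
  ∃ (A : Str U B) (a : A.Dom), SatS A φ₂ ∧ ∀ ψ ∈ t, Sat A ψ (fun _ => a)

/-- `tp_Bm(b)` : the 1-type of `b` in `Bm` (w.r.t. `φ₂`) -/
def tpOf {U B : Type} (Bm : Str U B) (φ₂ : Fml U B) (b : Bm.Dom) :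
    Set (Fml U B) :=
  {ψ | ψ ∈ clSet φ₂ ∧ ψ.free ⊆ {Var.x} ∧ Sat Bm ψ (fun _ => b)}

end GFC

namespace GFC

open Classical in
/-- replace the interpretations of the unary predicates `Qp` and `Pp` by `q`
and `p` (a {Q,P}-extension of the underlying Σ-structure) -/
noncomputable def override {U B : Type} (A : Str U B) (Qp Pp : U)
    (q p : A.Dom → Prop) : Str U B where
  Dom := A.Dom
  nonempty := A.nonempty
  u := fun P a => if P = Qp then q a else if P = Pp then p a else A.u P a
  b := A.b

/-- `φ_D(x) = ∃y(R_h xy ∧ ∀x(R_v yx → Px)) ∧ ∃y(R_v xy ∧ ∀x(R_h yx → ¬Px))` -/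
def phiD {U B : Type} (Pp : U) (Rh Rv : B) : Fml U B :=
  .conj
    (.ex .y (.conj (.batom Rh .x .y)
      (.all .x (.impl (.batom Rv .y .x) (.uatom Pp .x)))))
    (.ex .y (.conj (.batom Rv .x .y)
      (.all .x (.impl (.batom Rh .y .x) (.neg (.uatom Pp .x))))))

/-- `φ₂ = ∃x(Ox ∧ Qx) ∧ ∀x(Qx → (∃y(R_h xy ∧ Qy) ∨ ∃y(R_v xy ∧ Qy) ∨ φ_D(x)))` -/
def phiTwo {U B : Type} (O Qp Pp : U) (Rh Rv : B) : Fml U B :=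
  .conj
    (.ex .x (.conj (.uatom O .x) (.uatom Qp .x)))
    (.all .x (.impl (.uatom Qp .x)
      (.disj (.ex .y (.conj (.batom Rh .x .y) (.uatom Qp .y)))
        (.disj (.ex .y (.conj (.batom Rv .x .y) (.uatom Qp .y)))
          (phiD Pp Rh Rv)))))

/-- one `R_h/R_v`-step -/
def hvStep {U B : Type} (A : Str U B) (Rh Rv : B) (a a' : A.Dom) : Prop :=
  A.b Rh a a' ∨ A.b Rv a a'

/-- `a` is the root of a non-closing grid cell -/
def NonClosingRoot {U B : Type} (A : Str U B) (Rh Rv : B) (a : A.Dom) : Prop :=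
  ∃ b₁ b₂ : A.Dom, A.b Rh a b₁ ∧ A.b Rv a b₂ ∧
    ¬ ∃ c : A.Dom, A.b Rv b₁ c ∧ A.b Rh b₂ c

/-!
A set `Q` in which every element has an `R_h/R_v`-successor in `Q` or lies in a set `T` of exits
exists around `a` exactly when `a` starts an infinite path or reaches `T`: if no infinite path
starts at `a`, well-founded induction along the steps inside `Q` must end in `T`. In `φ₂` the exits
are the elements satisfying `φ_D` for a given interpretation of `P`. Such an element is the root of
a non-closing cell, since a common corner would be both in `P` and outside it; conversely, for a
non-closing cell one may take `P` to be the set of `R_v`-successors of its horizontal neighbour.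
-/

open Relation

section Paths

variable {α : Type*} {r : α → α → Prop} {T q : α → Prop} {a b : α}

/-- From any element of `q` one can keep moving along `r` inside `q` until `T` is reached, possibly
forever. This is the second conjunct of `φ₂`, with `T` standing for `φ_D`. -/
def ProgressesUntil (r : α → α → Prop) (T q : α → Prop) : Prop :=
  ∀ x, q x → (∃ y, r x y ∧ q y) ∨ T x

theorem ProgressesUntil.exists_reflTransGen_of_acc (hq : ProgressesUntil r T q)
    (hacc : Acc (Function.swap r) a) (ha : q a) : ∃ b, ReflTransGen r a b ∧ T b := by
  induction hacc with
  | intro x _ ih =>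
    rcases hq x ha with ⟨y, hxy, hy⟩ | hT
    · obtain ⟨b, hyb, hb⟩ := ih y hxy hy
      exact ⟨b, hyb.head hxy, hb⟩
    · exact ⟨x, .refl, hT⟩

theorem progressesUntil_not_acc_or_exists_reflTransGen (r : α → α → Prop) (T : α → Prop) :
    ProgressesUntil r T
      fun x => ¬ Acc (Function.swap r) x ∨ ∃ b, ReflTransGen r x b ∧ T b := by
  rintro x (hx | ⟨b, hxb, hb⟩)
  · obtain ⟨y, hy, hxy⟩ := exists_not_acc_lt_of_not_acc hx
    exact .inl ⟨y, hxy, .inl hy⟩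
  · rcases hxb.cases_head with rfl | ⟨y, hxy, hyb⟩
    · exact .inr hb
    · exact .inl ⟨y, hxy, .inr ⟨b, hyb, hb⟩⟩

theorem exists_progressesUntil_iff :
    (∃ q : α → Prop, q a ∧ ProgressesUntil r T q) ↔
      ¬ Acc (Function.swap r) a ∨ ∃ b, ReflTransGen r a b ∧ T b := by
  constructor
  · rintro ⟨q, ha, hq⟩
    exact or_iff_not_imp_left.mpr fun hacc =>
      hq.exists_reflTransGen_of_acc (not_not.mp hacc) ha
  · exact fun h => ⟨_, h, progressesUntil_not_acc_or_exists_reflTransGen r T⟩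

theorem reflTransGen_iff_exists_seq :
    ReflTransGen r a b ↔
      ∃ (k : ℕ) (ρ : ℕ → α), ρ 0 = a ∧ (∀ n < k, r (ρ n) (ρ (n + 1))) ∧ ρ k = b := by
  constructor
  · intro h
    induction h using ReflTransGen.head_induction_on with
    | refl => exact ⟨0, fun _ => b, rfl, by simp, rfl⟩
    | @head x _ hxy _ ih =>
      obtain ⟨k, ρ, rfl, hρ, hk⟩ := ih
      refine ⟨k + 1, fun n => n.casesOn x ρ, rfl, ?_, hk⟩
      rintro (_ | n) hn
      · exact hxy
      · exact hρ n (Nat.lt_of_succ_lt_succ hn)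
  · rintro ⟨k, ρ, rfl, hρ, rfl⟩
    have h : ReflTransGen (fun m n => r (ρ m) (ρ n)) 0 k :=
      reflTransGen_of_succ_of_le _ (fun n hn => hρ n hn.2) k.zero_le
    exact h.lift ρ fun _ _ => id

theorem exists_reflTransGen_and_iff_exists_seq :
    (∃ b, ReflTransGen r a b ∧ T b) ↔
      ∃ (k : ℕ) (ρ : ℕ → α), ρ 0 = a ∧ (∀ n < k, r (ρ n) (ρ (n + 1))) ∧ T (ρ k) := by
  simp only [reflTransGen_iff_exists_seq]
  constructor
  · rintro ⟨_, ⟨k, ρ, h0, hρ, rfl⟩, hT⟩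
    exact ⟨k, ρ, h0, hρ, hT⟩
  · rintro ⟨k, ρ, h0, hρ, hT⟩
    exact ⟨ρ k, ⟨k, ρ, h0, hρ, rfl⟩, hT⟩

end Paths

section Semantics

variable {U B : Type} {A : Str U B} {O Qp Pp : U} {Rh Rv : B} {q p : A.Dom → Prop}

/-- The meaning of `φ_D` at `a` when `P` is interpreted as `p`: the set `p` witnesses that some cell
rooted at `a` does not close, by separating the candidates for its fourth corner. -/
def SeparatesCell (A : Str U B) (Rh Rv : B) (p : A.Dom → Prop) (a : A.Dom) : Prop :=
  (∃ b, A.b Rh a b ∧ ∀ c, A.b Rv b c → p c) ∧ ∃ b, A.b Rv a b ∧ ∀ c, A.b Rh b c → ¬ p c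

theorem exists_separatesCell_iff_nonClosingRoot {a : A.Dom} :
    (∃ p, SeparatesCell A Rh Rv p a) ↔ NonClosingRoot A Rh Rv a := by
  constructor
  · rintro ⟨p, ⟨b₁, hab₁, hp⟩, b₂, hab₂, hnp⟩
    exact ⟨b₁, b₂, hab₁, hab₂, fun ⟨c, hb₁c, hb₂c⟩ => hnp c hb₂c (hp c hb₁c)⟩
  · rintro ⟨b₁, b₂, hab₁, hab₂, hopen⟩
    exact ⟨A.b Rv b₁, ⟨b₁, hab₁, fun _ => id⟩, b₂, hab₂, fun c hb₂c hb₁c => hopen ⟨c, hb₁c, hb₂c⟩⟩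

theorem sat_override_phiD_iff (hQP : Qp ≠ Pp) (σ : Var → (override A Qp Pp q p).Dom) :
    Sat (override A Qp Pp q p) (phiD Pp Rh Rv) σ ↔ SeparatesCell A Rh Rv p (σ .x) := by
  simp [phiD, SeparatesCell, Sat, upd, override, hQP.symm]

theorem sat_override_phiTwo_iff (hOQ : O ≠ Qp) (hOP : O ≠ Pp) (hQP : Qp ≠ Pp)
    (σ : Var → (override A Qp Pp q p).Dom) :
    Sat (override A Qp Pp q p) (phiTwo O Qp Pp Rh Rv) σ ↔
      (∃ a, A.u O a ∧ q a) ∧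
        ProgressesUntil (hvStep A Rh Rv) (SeparatesCell A Rh Rv p) q := by
  simp only [phiTwo, Sat, sat_override_phiD_iff hQP, ProgressesUntil]
  simp [upd, override, hvStep, hOQ, hOP, or_and_right, exists_or, or_assoc]

theorem satS_override_phiTwo_iff (hOQ : O ≠ Qp) (hOP : O ≠ Pp) (hQP : Qp ≠ Pp) :
    SatS (override A Qp Pp q p) (phiTwo O Qp Pp Rh Rv) ↔
      (∃ a, A.u O a ∧ q a) ∧
        ProgressesUntil (hvStep A Rh Rv) (SeparatesCell A Rh Rv p) q := by
  have : Nonempty A.Dom := A.nonempty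
  exact (forall_congr' (sat_override_phiTwo_iff hOQ hOP hQP)).trans (forall_const (Var → A.Dom))

theorem exists_separatesCell_progressesUntil_iff {a : A.Dom} :
    (∃ p q : A.Dom → Prop,
        q a ∧ ProgressesUntil (hvStep A Rh Rv) (SeparatesCell A Rh Rv p) q) ↔
      ¬ Acc (Function.swap (hvStep A Rh Rv)) a ∨
        ∃ b, ReflTransGen (hvStep A Rh Rv) a b ∧ NonClosingRoot A Rh Rv b := by
  simp only [exists_progressesUntil_iff, exists_or, exists_const,
    ← exists_separatesCell_iff_nonClosingRoot, ← exists_and_left]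
  rw [exists_comm]

end Semantics

/-- Lemma on φ₂: `φ₂` is satisfied in some {Q,P}-extension
of the Σ-structure `𝔄` iff some element of `O^𝔄` starts an infinite
`R_h/R_v`-path or a finite `R_h/R_v`-path ending at the root of a non-closing
grid cell. -/
theorem phi2_satisfiable_in_extension_iff_path_condition
    {U B : Type} (O Qp Pp : U) (Rh Rv : B)
    (hOQ : O ≠ Qp) (hOP : O ≠ Pp) (hQP : Qp ≠ Pp) (hR : Rh ≠ Rv)
    (A : Str U B) :
    (∃ q p : A.Dom → Prop, SatS (override A Qp Pp q p) (phiTwo O Qp Pp Rh Rv)) ↔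
    (∃ a : A.Dom, A.u O a ∧
      ((∃ ρ : ℕ → A.Dom, ρ 0 = a ∧ ∀ n, hvStep A Rh Rv (ρ n) (ρ (n+1))) ∨
       (∃ (k : ℕ) (ρ : ℕ → A.Dom), ρ 0 = a ∧
         (∀ n, n < k → hvStep A Rh Rv (ρ n) (ρ (n+1))) ∧
         NonClosingRoot A Rh Rv (ρ k)))) := by
  simp only [satS_override_phiTwo_iff hOQ hOP hQP]
  calc (∃ q p : A.Dom → Prop, (∃ a, A.u O a ∧ q a) ∧
          ProgressesUntil (hvStep A Rh Rv) (SeparatesCell A Rh Rv p) q)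
    _ ↔ ∃ a, A.u O a ∧ ∃ p q : A.Dom → Prop,
          q a ∧ ProgressesUntil (hvStep A Rh Rv) (SeparatesCell A Rh Rv p) q :=
      ⟨fun ⟨q, p, ⟨a, hO, ha⟩, hq⟩ => ⟨a, hO, p, q, ha, hq⟩,
        fun ⟨a, hO, p, q, ha, hq⟩ => ⟨q, p, ⟨a, hO, ha⟩, hq⟩⟩
    _ ↔ ∃ a, A.u O a ∧ (¬ Acc (Function.swap (hvStep A Rh Rv)) a ∨
          ∃ b, ReflTransGen (hvStep A Rh Rv) a b ∧ NonClosingRoot A Rh Rv b) := by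
      simp only [exists_separatesCell_progressesUntil_iff]
    _ ↔ _ := by
      simp only [not_acc_iff_exists_descending_chain, exists_reflTransGen_and_iff_exists_seq,
        Function.swap]

end GFC
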